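/- Let μ be a probability measure supported on the interval [-π, π]. Then ∫ cos θ dμ(θ) ≥ cos(√(∫ θ² dμ(θ))), and consequently √(∫ θ² dμ(θ)) ≥ arccos(∫ cos θ dμ(θ)). -/

import Mathlib

open Real MeasureTheory

/-- On `(0, π]`, the function `t ↦ sin t / t` is antitone. -/
lemma antitoneOn_sin_div_self : AntitoneOn (fun t : ℝ => sin t / t) (Set.Ioc 0 π) := by
  intro s hs t ht hst
  have hconc := strictConcaveOn_sin_Icc.concaveOn.2 (Set.left_mem_Icc.2 pi_pos.le)
    (Set.Ioc_subset_Icc_self ht) (sub_nonneg.2 <| (div_le_one ht.1).2 hst)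
    (div_nonneg hs.1.le ht.1.le) (sub_add_cancel 1 (s / t))
  simp only [smul_eq_mul, sin_zero, mul_zero, zero_add, div_mul_cancel₀ s ht.1.ne'] at hconc
  change sin t / t ≤ sin s / s
  rw [le_div_iff₀ hs.1]
  calc sin t / t * s = s / t * sin t := by ring
    _ ≤ sin s := hconc

/-- The function `x ↦ cos √x` is convex on `[0, π²]`. -/
lemma convexOn_cos_sqrt : ConvexOn ℝ (Set.Icc 0 (π ^ 2)) (fun x : ℝ => cos √x) := by
  have hderiv : ∀ x : ℝ, 0 < x →
      HasDerivAt (fun x : ℝ => cos √x) (-(sin √x / √x) / 2) x := fun x hx => by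
    convert (hasDerivAt_sqrt hx.ne').cos using 1
    ring
  refine MonotoneOn.convexOn_of_deriv (convex_Icc _ _) (by fun_prop) ?_ ?_ <;>
    rw [interior_Icc]
  · exact fun x hx => (hderiv x hx.1).differentiableAt.differentiableWithinAt
  · intro x hx y hy hxy
    have hmem : ∀ z ∈ Set.Ioo 0 (π ^ 2), √z ∈ Set.Ioc 0 π := fun z hz =>
      ⟨sqrt_pos.2 hz.1, sqrt_le_iff.2 ⟨pi_pos.le, hz.2.le⟩⟩
    rw [(hderiv x hx.1).deriv, (hderiv y hy.1).deriv]
    have := antitoneOn_sin_div_self (hmem x hx) (hmem y hy) (sqrt_le_sqrt hxy)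
    dsimp only at this
    linarith

/-- For a probability measure `μ` supported on `[-π, π]`:
`∫ cos θ dμ ≥ cos (√(∫ θ² dμ))`, and consequently
`√(∫ θ² dμ) ≥ arccos (∫ cos θ dμ)`. -/
theorem integral_cos_ge_cos_sqrt_integral_sq (μ : Measure ℝ) [IsProbabilityMeasure μ]
    (hsupp : ∀ᵐ θ ∂μ, θ ∈ Set.Icc (-Real.pi) Real.pi) :
    (∫ θ, Real.cos θ ∂μ) ≥ Real.cos (Real.sqrt (∫ θ, θ ^ 2 ∂μ)) ∧
      Real.sqrt (∫ θ, θ ^ 2 ∂μ) ≥ Real.arccos (∫ θ, Real.cos θ ∂μ) := by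
  have hcos : ∀ θ : ℝ, cos √(θ ^ 2) = cos θ := fun θ => by rw [sqrt_sq_eq_abs, cos_abs]
  have hsq : ∀ᵐ θ ∂μ, θ ^ 2 ∈ Set.Icc 0 (π ^ 2) := by
    filter_upwards [hsupp] with θ hθ
    exact ⟨sq_nonneg θ, sq_le_sq' hθ.1 hθ.2⟩
  have hint_sq : Integrable (fun θ : ℝ => θ ^ 2) μ :=
    Integrable.of_mem_Icc 0 (π ^ 2) (by fun_prop) hsq
  have hint_cos : Integrable (fun θ : ℝ => cos θ) μ :=
    Integrable.of_mem_Icc (-1) 1 (by fun_prop) (.of_forall cos_mem_Icc)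
  have hjensen : cos √(∫ θ, θ ^ 2 ∂μ) ≤ ∫ θ, cos θ ∂μ := by
    simpa only [hcos] using convexOn_cos_sqrt.map_integral_le (by fun_prop) isClosed_Icc hsq
      hint_sq (by simpa only [Function.comp_def, hcos] using hint_cos)
  have hmean : ∫ θ, θ ^ 2 ∂μ ∈ Set.Icc 0 (π ^ 2) :=
    (convex_Icc _ _).integral_mem isClosed_Icc hsq hint_sq
  refine ⟨hjensen, (arccos_le_arccos hjensen).trans_eq ?_⟩
  exact arccos_cos (sqrt_nonneg _) (sqrt_le_iff.2 ⟨pi_pos.le, hmean.2⟩)
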